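/- Let B be the smallest class of permutation patterns that contains [12], [21], [132], [213], [231], [312], and is closed under the following four operations: (i) σ ∈ S_{K−1} ↦ σ_+ = [K, σ(1), …, σ(K−1)] ∈ S_K; (ii) σ ∈ S_{K−1} ↦ σ_− = [σ(1)+1, …, σ(K−1)+1, 1] ∈ S_K; (iii) σ ∈ S_{K−2} ↦ σ_{++} = [K−1, K, σ(1), …, σ(K−2)] ∈ S_K; (iv) σ ∈ S_{K−2} ↦ σ_{−−} = [σ(1)+2, …, σ(K−2)+2, 1, 2] ∈ S_K. Then for every σ ∈ B, every N ≥ 1, and every x ∈ S_N, x contains σ if and only if x factorizes over σ. -/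

import Mathlib

/-!
The theorem reduces to a statement about the poset `P` on positions in which `p` lies below `q`
when `p < q` and `x p < x q`.

*Factorizations are convex occurrences.* In a length-additive product `x = z * σ' * y` no pair of
positions changes its relative order twice, so the orders of the positions given by `y` and by
`σ' * y` are linear extensions of `P`. The two window conditions say that the preimage of the window
under `y` is an occurrence of `σ`, sitting in consecutive places. Conversely, an occurrence of `σ`
whose positions form a convex subset `S` of `P` can be made consecutive: list the points outside
`S` lying below some point of `S`, then `S`, then everything else. Listing `S` by position gives
`y`; listing it by value gives `w = σ' * y`, and `z = x * w⁻¹`. This is `factorizesOver_of_convex`,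
with the length count in `len_eq_of_linearExtensions`.

*Bountiful patterns occur convexly.* `exists_convex` shows by induction on the class that a
pattern occurring inside a set `R` of positions has an occurrence in `R` with no point of `R`
strictly between two of its points in `P`. For `[12]`, `[132]` and `[213]`, a point strictly
between can be exchanged for a point of the occurrence, giving a narrower one; `[21]` is
an antichain, and `[231]` and `[312]` are `[12]₋` and `[12]₊`. The points added by
`σ₊` or `σ₋` are incomparable in `P` to the rest of the pattern, so it suffices to apply the
induction hypothesis in the quadrant that they cut out of `R`. For `σ₊₊` and `σ₋₋` the two added
points form a `[12]`, which is first shrunk to a covering pair.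
-/

/-- Coxeter length of a permutation of `Fin N`: its number of inversions. -/
def len {N : ℕ} (x : Equiv.Perm (Fin N)) : ℕ :=
  (Finset.univ.filter fun p : Fin N × Fin N => p.1 < p.2 ∧ x p.2 < x p.1).card

/-- `x` contains the pattern `σ`. -/
def Contains {N K : ℕ} (x : Equiv.Perm (Fin N)) (σ : Equiv.Perm (Fin K)) : Prop :=
  ∃ f : Fin K → Fin N, StrictMono f ∧ ∀ a b : Fin K, x (f a) < x (f b) ↔ σ a < σ b

/-- `x` factorizes over the pattern `σ`: there is a shift `σ'` of `σ` by `j` and a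
length-additive factorization `x = z ∘ σ' ∘ y` with `y⁻¹` increasing on the window
`{j+1,…,j+k}` and `z` increasing on the window. -/
def FactorizesOver {N K : ℕ} (x : Equiv.Perm (Fin N)) (σ : Equiv.Perm (Fin K)) : Prop :=
  ∃ (j : ℕ) (hj : j + K ≤ N) (σ' y z : Equiv.Perm (Fin N)),
    (∀ t : Fin K, (σ' ⟨j + t.val, by have := t.isLt; omega⟩).val = j + (σ t).val) ∧
    (∀ m : Fin N, (m.val < j ∨ j + K ≤ m.val) → σ' m = m) ∧
    x = z * σ' * y ∧
    len x = len y + len σ + len z ∧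
    (∀ a b : Fin K, a < b →
      y⁻¹ ⟨j + a.val, by have := a.isLt; omega⟩ < y⁻¹ ⟨j + b.val, by have := b.isLt; omega⟩) ∧
    (∀ a b : Fin K, a < b →
      z ⟨j + a.val, by have := a.isLt; omega⟩ < z ⟨j + b.val, by have := b.isLt; omega⟩)


/-- The pattern [231]. -/
def p231 : Equiv.Perm (Fin 3) := ⟨![1, 2, 0], ![2, 0, 1], by decide, by decide⟩

/-- The pattern [312]. -/
def p312 : Equiv.Perm (Fin 3) := ⟨![2, 0, 1], ![1, 2, 0], by decide, by decide⟩

/-- The pattern [132]. -/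
def p132 : Equiv.Perm (Fin 3) := ⟨![0, 2, 1], ![0, 2, 1], by decide, by decide⟩

/-- The pattern [213]. -/
def p213 : Equiv.Perm (Fin 3) := ⟨![1, 0, 2], ![1, 0, 2], by decide, by decide⟩

/-- The smallest class of patterns containing [12], [21], [132], [213], [231], [312]
and closed under the operations σ ↦ σ₊, σ ↦ σ₋, σ ↦ σ₊₊, σ ↦ σ₋₋.  Each closure
constructor characterizes the new pattern `τ` pointwise (in 0-based one-line notation),
which determines it uniquely. -/
inductive Bountiful : {K : ℕ} → Equiv.Perm (Fin K) → Prop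
  /-- the pattern [12] (the identity of S₂) -/
  | base12 : Bountiful (1 : Equiv.Perm (Fin 2))
  /-- the pattern [21] -/
  | base21 : Bountiful (Equiv.swap (0 : Fin 2) 1)
  | base132 : Bountiful p132
  | base213 : Bountiful p213
  | base231 : Bountiful p231
  | base312 : Bountiful p312
  /-- σ ∈ S_{K-1} ↦ σ₊ = [K, σ(1), …, σ(K-1)] ∈ S_K -/
  | plus {K : ℕ} (σ : Equiv.Perm (Fin K)) (τ : Equiv.Perm (Fin (K + 1)))
      (h0 : (τ ⟨0, Nat.succ_pos K⟩).val = K)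
      (hs : ∀ i : Fin K, (τ i.succ).val = (σ i).val)
      (hσ : Bountiful σ) : Bountiful τ
  /-- σ ∈ S_{K-1} ↦ σ₋ = [σ(1)+1, …, σ(K-1)+1, 1] ∈ S_K -/
  | minus {K : ℕ} (σ : Equiv.Perm (Fin K)) (τ : Equiv.Perm (Fin (K + 1)))
      (h0 : (τ (Fin.last K)).val = 0)
      (hs : ∀ i : Fin K, (τ i.castSucc).val = (σ i).val + 1)
      (hσ : Bountiful σ) : Bountiful τ
  /-- σ ∈ S_{K-2} ↦ σ₊₊ = [K-1, K, σ(1), …, σ(K-2)] ∈ S_K -/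
  | plus2 {K : ℕ} (σ : Equiv.Perm (Fin K)) (τ : Equiv.Perm (Fin (K + 2)))
      (h0 : (τ ⟨0, by omega⟩).val = K)
      (h1 : (τ ⟨1, by omega⟩).val = K + 1)
      (hs : ∀ i : Fin K, (τ ⟨i.val + 2, by have := i.isLt; omega⟩).val = (σ i).val)
      (hσ : Bountiful σ) : Bountiful τ
  /-- σ ∈ S_{K-2} ↦ σ₋₋ = [σ(1)+2, …, σ(K-2)+2, 1, 2] ∈ S_K -/
  | minus2 {K : ℕ} (σ : Equiv.Perm (Fin K)) (τ : Equiv.Perm (Fin (K + 2)))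
      (h0 : (τ ⟨K, by omega⟩).val = 0)
      (h1 : (τ ⟨K + 1, by omega⟩).val = 1)
      (hs : ∀ i : Fin K, (τ ⟨i.val, by have := i.isLt; omega⟩).val = (σ i).val + 2)
      (hσ : Bountiful σ) : Bountiful τ

theorem perm_inv_apply {α : Type*} (e : Equiv.Perm α) (a : α) : e⁻¹ (e a) = a :=
  e.symm_apply_apply a

theorem perm_apply_inv {α : Type*} (e : Equiv.Perm α) (a : α) : e (e⁻¹ a) = a :=
  e.apply_symm_apply a

/-- `f` lists the positions of an occurrence of `σ` in `x`, all of them lying in `R`. -/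
structure IsOcc {N K : ℕ} (x : Equiv.Perm (Fin N)) (R : Set (Fin N)) (σ : Equiv.Perm (Fin K))
    (f : Fin K → Fin N) : Prop where
  mem : ∀ a, f a ∈ R
  mono : StrictMono f
  iff : ∀ a b : Fin K, x (f a) < x (f b) ↔ σ a < σ b

/-- No point of `R` lies strictly between two points listed by `f`, both in position and in value.
For bountiful patterns this is equivalent to convexity, as they avoid `[123]`. -/
def Unobstructed {N K : ℕ} (x : Equiv.Perm (Fin N)) (R : Set (Fin N)) (f : Fin K → Fin N) : Prop :=
  ∀ m ∈ R, ∀ a b, f a < m → m < f b → x (f a) < x m → x m < x (f b) → False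

/-! ### Bountiful patterns have unobstructed occurrences -/

/-- A pair `i < j` with `x i < x j` can be shrunk, keeping `i`, to a covering pair of the poset. -/
theorem exists_cover {N : ℕ} (x : Equiv.Perm (Fin N)) (R : Set (Fin N)) (i j : Fin N)
    (hj : j ∈ R) (hij : i < j) (hx : x i < x j) :
    ∃ j' ∈ R, i < j' ∧ j' ≤ j ∧ x i < x j' ∧ x j' ≤ x j ∧
      ∀ m ∈ R, i < m → m < j' → x i < x m → x m < x j' → False := by
  induction j using WellFoundedLT.induction with
  | ind j ih =>
    by_cases h : ∃ m ∈ R, i < m ∧ m < j ∧ x i < x m ∧ x m < x j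
    · obtain ⟨m, hm, h1, h2, h3, h4⟩ := h
      obtain ⟨j', a, b, c, d, e, g⟩ := ih m h2 hm h1 h3
      exact ⟨j', a, b, c.trans h2.le, d, e.trans h4.le, g⟩
    · exact ⟨j, hj, hij, le_rfl, hx, le_rfl, fun m a b c d e => h ⟨m, a, b, c, d, e⟩⟩

theorem exists_132 {N : ℕ} (x : Equiv.Perm (Fin N)) (R : Set (Fin N)) (n : ℕ) :
    ∀ (i j k : Fin N), i ∈ R → j ∈ R → k ∈ R → i < j → j < k → x i < x k → x k < x j →
    (j.val - i.val) + (k.val - i.val) = n →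
    ∃ i ∈ R, ∃ j ∈ R, ∃ k ∈ R, i < j ∧ j < k ∧ x i < x k ∧ x k < x j ∧
      (∀ m ∈ R, i < m → m < j → x i < x m → x m < x j → False) ∧
      (∀ m ∈ R, i < m → m < k → x i < x m → x m < x k → False) := by
  induction n using Nat.strong_induction_on with
  | _ n ih =>
    intro i j k hi hj hk hij hjk h1 h2 hn
    by_contra hcon
    apply hcon
    refine ⟨i, hi, j, hj, k, hk, hij, hjk, h1, h2, ?_, ?_⟩
    · intro m hm a b c d
      rcases lt_trichotomy (x m) (x k) with h | h | h
      · exact hcon (ih _ (by clear ih hcon; omega) m j k hm hj hk b hjk h h2 rfl)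
      · have := x.injective h
        clear ih hcon; order
      · exact hcon (ih _ (by clear ih hcon; omega) i m k hi hm hk a (by clear ih hcon; order) h1 h rfl)
    · intro m hm a b c d
      rcases lt_trichotomy m j with h | h | h
      · exact hcon (ih _ (by clear ih hcon; omega) m j k hm hj hk h hjk d h2 rfl)
      · subst h; clear ih hcon; order
      · exact hcon (ih _ (by clear ih hcon; omega) i j m hi hj hm hij h c (by clear ih hcon; order) rfl)

theorem exists_213 {N : ℕ} (x : Equiv.Perm (Fin N)) (R : Set (Fin N)) (n : ℕ) :
    ∀ (i j k : Fin N), i ∈ R → j ∈ R → k ∈ R → i < j → j < k → x j < x i → x i < x k →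
    (k.val - i.val) + (k.val - j.val) = n →
    ∃ i ∈ R, ∃ j ∈ R, ∃ k ∈ R, i < j ∧ j < k ∧ x j < x i ∧ x i < x k ∧
      (∀ m ∈ R, i < m → m < k → x i < x m → x m < x k → False) ∧
      (∀ m ∈ R, j < m → m < k → x j < x m → x m < x k → False) := by
  induction n using Nat.strong_induction_on with
  | _ n ih =>
    intro i j k hi hj hk hij hjk h1 h2 hn
    by_contra hcon
    apply hcon
    refine ⟨i, hi, j, hj, k, hk, hij, hjk, h1, h2, ?_, ?_⟩
    · intro m hm a b c d
      rcases lt_trichotomy m j with h | h | h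
      · exact hcon (ih _ (by clear ih hcon; omega) m j k hm hj hk h hjk (by clear ih hcon; order) d rfl)
      · subst h; clear ih hcon; order
      · exact hcon (ih _ (by clear ih hcon; omega) i j m hi hj hm hij h h1 c rfl)
    · intro m hm a b c d
      rcases lt_trichotomy (x m) (x i) with h | h | h
      · exact hcon (ih _ (by clear ih hcon; omega) i m k hi hm hk (by clear ih hcon; order) b h h2 rfl)
      · have := x.injective h
        clear ih hcon; order
      · exact hcon (ih _ (by clear ih hcon; omega) i j m hi hj hm hij a h1 h rfl)

/-- `σ` has the property that whenever it occurs inside a set of positions, it has an occurrence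
in that set which is unobstructed there. Relativizing to arbitrary sets makes the property
inherited by `σ₊`, `σ₋`, `σ₊₊` and `σ₋₋`. -/
def ConvexOcc {K : ℕ} (σ : Equiv.Perm (Fin K)) : Prop :=
  ∀ (N : ℕ) (x : Equiv.Perm (Fin N)) (R : Set (Fin N)) (f : Fin K → Fin N), IsOcc x R σ f →
    ∃ g, IsOcc x R σ g ∧ Unobstructed x R g

theorem convexOcc_12 : ConvexOcc (1 : Equiv.Perm (Fin 2)) := by
  intro N x R f hf
  have h01 : f 0 < f 1 := hf.mono (by decide)
  have hx : x (f 0) < x (f 1) := (hf.iff 0 1).2 (by decide)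
  obtain ⟨j, hj, a, b, c, d, e⟩ := exists_cover x R (f 0) (f 1) (hf.mem 1) h01 hx
  refine ⟨![f 0, j], ⟨?_, ?_, ?_⟩, ?_⟩
  · simp [Fin.forall_fin_two, hf.mem, hj]
  · rw [Fin.strictMono_iff_lt_succ]
    simpa using a
  · simp [Fin.forall_fin_two, c, c.le]
  · intro m hm
    simp only [Fin.forall_fin_two, Matrix.cons_val_zero, Matrix.cons_val_one]
    have := e m hm
    clear hf e
    grind

theorem convexOcc_21 : ConvexOcc (Equiv.swap (0 : Fin 2) 1) := by
  intro N x R f hf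
  refine ⟨f, hf, ?_⟩
  have h01 : f 0 < f 1 := hf.mono (by decide)
  have hx : x (f 1) < x (f 0) := (hf.iff 1 0).2 (by decide)
  intro m hm
  simp only [Fin.forall_fin_two]
  clear hf
  grind

theorem convexOcc_132 : ConvexOcc p132 := by
  intro N x R f hf
  have h01 : f 0 < f 1 := hf.mono (by decide)
  have h12 : f 1 < f 2 := hf.mono (by decide)
  have hx : x (f 0) < x (f 2) := (hf.iff 0 2).2 (by decide)
  have hx' : x (f 2) < x (f 1) := (hf.iff 2 1).2 (by decide)
  obtain ⟨i, hi, j, hj, k, hk, h1, h2, h3, h4, h5, h6⟩ := exists_132 x R _ (f 0) (f 1) (f 2)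
    (hf.mem 0) (hf.mem 1) (hf.mem 2) h01 h12 hx hx' rfl
  refine ⟨![i, j, k], ⟨?_, ?_, ?_⟩, ?_⟩
  · simp [Fin.forall_fin_succ, hi, hj, hk]
  · rw [Fin.strictMono_iff_lt_succ]
    simp [Fin.forall_fin_succ, h1, h2]
  · simp [Fin.forall_fin_succ, p132, h3, h4, h3.le, h4.le, h3.trans h4, (h3.trans h4).le]
  · intro m hm
    simp only [Fin.forall_fin_succ]
    simp
    grind

theorem convexOcc_213 : ConvexOcc p213 := by
  intro N x R f hf
  have h01 : f 0 < f 1 := hf.mono (by decide)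
  have h12 : f 1 < f 2 := hf.mono (by decide)
  have hx : x (f 1) < x (f 0) := (hf.iff 1 0).2 (by decide)
  have hx' : x (f 0) < x (f 2) := (hf.iff 0 2).2 (by decide)
  obtain ⟨i, hi, j, hj, k, hk, h1, h2, h3, h4, h5, h6⟩ := exists_213 x R _ (f 0) (f 1) (f 2)
    (hf.mem 0) (hf.mem 1) (hf.mem 2) h01 h12 hx hx' rfl
  refine ⟨![i, j, k], ⟨?_, ?_, ?_⟩, ?_⟩
  · simp [Fin.forall_fin_succ, hi, hj, hk]
  · rw [Fin.strictMono_iff_lt_succ]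
    simp [Fin.forall_fin_succ, h1, h2]
  · simp [Fin.forall_fin_succ, p213, h3, h4, h3.le, h4.le, h3.trans h4, (h3.trans h4).le]
  · intro m hm
    simp only [Fin.forall_fin_succ]
    simp
    grind

theorem convexOcc_plus {K : ℕ} (σ : Equiv.Perm (Fin K)) (τ : Equiv.Perm (Fin (K + 1)))
    (h0 : (τ 0).val = K) (hs : ∀ i : Fin K, (τ i.succ).val = (σ i).val)
    (ih : ConvexOcc σ) : ConvexOcc τ := by
  intro N x R f hf
  have key (i : Fin K) : τ i.succ < τ 0 := by
    rw [Fin.lt_def, h0, hs]; exact (σ i).isLt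
  have key2 (a b : Fin K) : τ a.succ < τ b.succ ↔ σ a < σ b := by
    rw [Fin.lt_def, Fin.lt_def, hs, hs]
  -- the part of `R` to the lower right of the leading point
  obtain ⟨g, hg, hu⟩ := ih N x {m | m ∈ R ∧ f 0 < m ∧ x m < x (f 0)} (fun i => f i.succ)
    ⟨fun a => ⟨hf.mem _, hf.mono (Fin.succ_pos a), (hf.iff _ _).2 (key a)⟩,
     fun a b h => hf.mono (Fin.succ_lt_succ_iff.2 h),
     fun a b => (hf.iff _ _).trans (key2 a b)⟩
  refine ⟨Fin.cons (f 0) g, ⟨?_, ?_, ?_⟩, ?_⟩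
  · intro a
    cases a using Fin.cases with
    | zero => exact hf.mem 0
    | succ a => exact (hg.mem a).1
  · intro a b hab
    cases a using Fin.cases with
    | zero =>
      cases b using Fin.cases with
      | zero => simp at hab
      | succ b => exact (hg.mem b).2.1
    | succ a =>
      cases b using Fin.cases with
      | zero => simp at hab
      | succ b => exact hg.mono (Fin.succ_lt_succ_iff.1 hab)
  · intro a b
    cases a using Fin.cases with
    | zero =>
      cases b using Fin.cases with
      | zero => simp
      | succ b =>
        simp only [Fin.cons_zero, Fin.cons_succ]
        exact iff_of_false (hg.mem b).2.2.not_gt (key b).not_gt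
    | succ a =>
      cases b using Fin.cases with
      | zero =>
        simp only [Fin.cons_zero, Fin.cons_succ]
        exact iff_of_true (hg.mem a).2.2 (key a)
      | succ b => simpa only [Fin.cons_succ] using (hg.iff a b).trans (key2 a b).symm
  · intro m hm a b
    cases a using Fin.cases with
    | zero =>
      cases b using Fin.cases with
      | zero => simp only [Fin.cons_zero]; grind
      | succ b =>
        have := hg.mem b
        simp only [Fin.cons_zero, Fin.cons_succ]; grind
    | succ a =>
      have ha := hg.mem a
      cases b using Fin.cases with
      | zero => simp only [Fin.cons_zero, Fin.cons_succ]; grind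
      | succ b =>
        have hb := hg.mem b
        simp only [Fin.cons_succ]
        intro h1 h2 h3 h4
        exact hu m ⟨hm, ha.2.1.trans h1, h4.trans hb.2.2⟩ a b h1 h2 h3 h4

theorem convexOcc_minus {K : ℕ} (σ : Equiv.Perm (Fin K)) (τ : Equiv.Perm (Fin (K + 1)))
    (h0 : (τ (Fin.last K)).val = 0) (hs : ∀ i : Fin K, (τ i.castSucc).val = (σ i).val + 1)
    (ih : ConvexOcc σ) : ConvexOcc τ := by
  intro N x R f hf
  have key (i : Fin K) : τ (Fin.last K) < τ i.castSucc := by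
    rw [Fin.lt_def, h0, hs]; exact Nat.succ_pos _
  have key2 (a b : Fin K) : τ a.castSucc < τ b.castSucc ↔ σ a < σ b := by
    rw [Fin.lt_def, Fin.lt_def, hs, hs]; omega
  -- the part of `R` to the upper left of the final point
  obtain ⟨g, hg, hu⟩ := ih N x {m | m ∈ R ∧ m < f (Fin.last K) ∧ x (f (Fin.last K)) < x m}
    (fun i => f i.castSucc)
    ⟨fun a => ⟨hf.mem _, hf.mono (Fin.castSucc_lt_last a), (hf.iff _ _).2 (key a)⟩,
     fun a b h => hf.mono (Fin.castSucc_lt_castSucc_iff.2 h),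
     fun a b => (hf.iff _ _).trans (key2 a b)⟩
  refine ⟨Fin.snoc (α := fun _ => Fin N) g (f (Fin.last K)), ⟨?_, ?_, ?_⟩, ?_⟩
  · intro a
    cases a using Fin.lastCases with
    | last => simpa using hf.mem _
    | cast a => simpa using (hg.mem a).1
  · intro a b hab
    cases a using Fin.lastCases with
    | last => exact absurd hab (Fin.le_last b).not_gt
    | cast a =>
      cases b using Fin.lastCases with
      | last => simpa using (hg.mem a).2.1
      | cast b => simpa using hg.mono (Fin.castSucc_lt_castSucc_iff.1 hab)
  · intro a b
    cases a using Fin.lastCases with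
    | last =>
      cases b using Fin.lastCases with
      | last => simp
      | cast b =>
        simp only [Fin.snoc_last, Fin.snoc_castSucc]
        exact iff_of_true (hg.mem b).2.2 (key b)
    | cast a =>
      cases b using Fin.lastCases with
      | last =>
        simp only [Fin.snoc_last, Fin.snoc_castSucc]
        exact iff_of_false (hg.mem a).2.2.not_gt (key a).not_gt
      | cast b => simpa only [Fin.snoc_castSucc] using (hg.iff a b).trans (key2 a b).symm
  · intro m hm a b
    cases a using Fin.lastCases with
    | last =>
      cases b using Fin.lastCases with
      | last => simp only [Fin.snoc_last]; grind
      | cast b =>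
        have := hg.mem b
        simp only [Fin.snoc_last, Fin.snoc_castSucc]; grind
    | cast a =>
      have ha := hg.mem a
      cases b using Fin.lastCases with
      | last => simp only [Fin.snoc_last, Fin.snoc_castSucc]; grind
      | cast b =>
        have hb := hg.mem b
        simp only [Fin.snoc_castSucc]
        intro h1 h2 h3 h4
        exact hu m ⟨hm, h2.trans hb.2.1, ha.2.2.trans h3⟩ a b h1 h2 h3 h4

theorem convexOcc_plus2 {K : ℕ} (σ : Equiv.Perm (Fin K)) (τ : Equiv.Perm (Fin (K + 2)))
    (h0 : (τ 0).val = K) (h1 : (τ (Fin.succ 0)).val = K + 1)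
    (hs : ∀ i : Fin K, (τ i.succ.succ).val = (σ i).val)
    (ih : ConvexOcc σ) : ConvexOcc τ := by
  intro N x R f hf
  have key01 : τ 0 < τ (Fin.succ 0) := by rw [Fin.lt_def, h0, h1]; omega
  have key0 (i : Fin K) : τ i.succ.succ < τ 0 := by
    rw [Fin.lt_def, h0, hs]; exact (σ i).isLt
  have key1 (i : Fin K) : τ i.succ.succ < τ (Fin.succ 0) := (key0 i).trans key01
  have key2 (a b : Fin K) : τ a.succ.succ < τ b.succ.succ ↔ σ a < σ b := by
    rw [Fin.lt_def, Fin.lt_def, hs, hs]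
  obtain ⟨q, hq, c1, c2, c3, c4, c5⟩ := exists_cover x R (f 0) (f (Fin.succ 0)) (hf.mem _)
    (hf.mono (Fin.succ_pos _)) ((hf.iff _ _).2 key01)
  obtain ⟨g, hg, hu⟩ := ih N x {m | m ∈ R ∧ q < m ∧ x m < x (f 0)} (fun i => f i.succ.succ)
    ⟨fun a => ⟨hf.mem _, c2.trans_lt (hf.mono (Fin.succ_lt_succ_iff.2 (Fin.succ_pos a))),
      (hf.iff _ _).2 (key0 a)⟩,
     fun a b h => hf.mono (Fin.succ_lt_succ_iff.2 (Fin.succ_lt_succ_iff.2 h)),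
     fun a b => (hf.iff _ _).trans (key2 a b)⟩
  refine ⟨Fin.cons (f 0) (Fin.cons q g), ⟨?_, ?_, ?_⟩, ?_⟩
  · simp only [Fin.forall_fin_succ (n := K + 1), Fin.forall_fin_succ (n := K), Fin.cons_zero,
      Fin.cons_succ]
    exact ⟨hf.mem 0, hq, fun a => (hg.mem a).1⟩
  · intro a b
    revert a b
    simp only [Fin.forall_fin_succ (n := K + 1), Fin.forall_fin_succ (n := K), Fin.cons_zero,
      Fin.cons_succ, Fin.succ_lt_succ_iff]
    have hm := hg.mem
    have hmono (a b : Fin K) (h : a < b) : g a < g b := hg.mono h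
    simp only [Set.mem_ofPred_eq] at hm
    refine ⟨⟨?_, ?_, ?_⟩, ⟨?_, ?_, ?_⟩, fun a => ⟨?_, ?_, ?_⟩⟩ <;> grind
  · simp only [Fin.forall_fin_succ (n := K + 1), Fin.forall_fin_succ (n := K), Fin.cons_zero,
      Fin.cons_succ]
    have hm := hg.mem
    have hi := hg.iff
    simp only [Set.mem_ofPred_eq] at hm
    refine ⟨⟨?_, ?_, ?_⟩, ⟨?_, ?_, ?_⟩, fun a => ⟨?_, ?_, ?_⟩⟩ <;> grind
  · intro m hm
    simp only [Fin.forall_fin_succ (n := K + 1), Fin.forall_fin_succ (n := K), Fin.cons_zero,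
      Fin.cons_succ]
    have hmem := hg.mem
    simp only [Set.mem_ofPred_eq] at hmem
    refine ⟨⟨?_, ?_, ?_⟩, ⟨?_, ?_, ?_⟩, fun a => ⟨?_, ?_, fun b h1 h2 h3 h4 =>
      hu m ⟨hm, (hg.mem a).2.1.trans h1, h4.trans (hg.mem b).2.2⟩ a b h1 h2 h3 h4⟩⟩ <;> grind

theorem convexOcc_minus2 {K : ℕ} (σ : Equiv.Perm (Fin K)) (τ : Equiv.Perm (Fin (K + 2)))
    (h0 : (τ (Fin.last K).castSucc).val = 0) (h1 : (τ (Fin.last (K + 1))).val = 1)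
    (hs : ∀ i : Fin K, (τ i.castSucc.castSucc).val = (σ i).val + 2)
    (ih : ConvexOcc σ) : ConvexOcc τ := by
  intro N x R f hf
  have key01 : τ (Fin.last K).castSucc < τ (Fin.last (K + 1)) := by
    rw [Fin.lt_def, h0, h1]; omega
  have key1 (i : Fin K) : τ (Fin.last (K + 1)) < τ i.castSucc.castSucc := by
    rw [Fin.lt_def, h1, hs]; omega
  have key0 (i : Fin K) : τ (Fin.last K).castSucc < τ i.castSucc.castSucc := key01.trans (key1 i)
  have key2 (a b : Fin K) : τ a.castSucc.castSucc < τ b.castSucc.castSucc ↔ σ a < σ b := by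
    rw [Fin.lt_def, Fin.lt_def, hs, hs]; omega
  obtain ⟨q, hq, c1, c2, c3, c4, c5⟩ := exists_cover x R (f (Fin.last K).castSucc)
    (f (Fin.last (K + 1))) (hf.mem _)
    (hf.mono (Fin.castSucc_lt_last _)) ((hf.iff _ _).2 key01)
  obtain ⟨g, hg, hu⟩ := ih N x {m | m ∈ R ∧ m < f (Fin.last K).castSucc ∧ x q < x m}
    (fun i => f i.castSucc.castSucc)
    ⟨fun a => ⟨hf.mem _, hf.mono (Fin.castSucc_lt_castSucc_iff.2 (Fin.castSucc_lt_last a)),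
      c4.trans_lt ((hf.iff _ _).2 (key1 a))⟩,
     fun a b h => hf.mono (Fin.castSucc_lt_castSucc_iff.2 (Fin.castSucc_lt_castSucc_iff.2 h)),
     fun a b => (hf.iff _ _).trans (key2 a b)⟩
  refine ⟨Fin.snoc (α := fun _ => Fin N)
    (Fin.snoc (α := fun _ => Fin N) g (f (Fin.last K).castSucc)) q, ⟨?_, ?_, ?_⟩, ?_⟩
  · simp only [Fin.forall_fin_succ' (n := K + 1), Fin.forall_fin_succ' (n := K), Fin.snoc_last,
      Fin.snoc_castSucc]
    exact ⟨⟨fun a => (hg.mem a).1, hf.mem _⟩, hq⟩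
  · intro a b
    revert a b
    simp only [Fin.forall_fin_succ' (n := K + 1), Fin.forall_fin_succ' (n := K), Fin.snoc_last,
      Fin.snoc_castSucc, Fin.castSucc_lt_castSucc_iff]
    have hm := hg.mem
    have hmono (a b : Fin K) (h : a < b) : g a < g b := hg.mono h
    have hl (n : ℕ) (i : Fin n) : ¬ Fin.last n < i.castSucc := (Fin.castSucc_lt_last i).not_gt
    simp only [Set.mem_ofPred_eq] at hm
    refine ⟨⟨fun a => ⟨⟨?_, ?_⟩, ?_⟩, ⟨?_, ?_⟩, ?_⟩, ⟨?_, ?_⟩, ?_⟩ <;> grind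
  · simp only [Fin.forall_fin_succ' (n := K + 1), Fin.forall_fin_succ' (n := K), Fin.snoc_last,
      Fin.snoc_castSucc]
    have hm := hg.mem
    have hi := hg.iff
    simp only [Set.mem_ofPred_eq] at hm
    refine ⟨⟨fun a => ⟨⟨?_, ?_⟩, ?_⟩, ⟨?_, ?_⟩, ?_⟩, ⟨?_, ?_⟩, ?_⟩ <;> grind
  · intro m hm
    simp only [Fin.forall_fin_succ' (n := K + 1), Fin.forall_fin_succ' (n := K), Fin.snoc_last,
      Fin.snoc_castSucc]
    have hmem := hg.mem
    simp only [Set.mem_ofPred_eq] at hmem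
    refine ⟨⟨fun a => ⟨⟨fun b h1 h2 h3 h4 =>
      hu m ⟨hm, h2.trans (hg.mem b).2.1, (hg.mem a).2.2.trans h3⟩ a b h1 h2 h3 h4, ?_⟩, ?_⟩,
      ⟨?_, ?_⟩, ?_⟩, ⟨?_, ?_⟩, ?_⟩ <;> grind

theorem exists_convex {K : ℕ} (σ : Equiv.Perm (Fin K)) (hσ : Bountiful σ) : ConvexOcc σ := by
  induction hσ with
  | base12 => exact convexOcc_12
  | base21 => exact convexOcc_21
  | base132 => exact convexOcc_132
  | base213 => exact convexOcc_213
  | base231 => exact convexOcc_minus 1 p231 (by decide) (by decide) convexOcc_12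
  | base312 => exact convexOcc_plus 1 p312 (by decide) (by decide) convexOcc_12
  | plus σ τ h0 hs _ ih => exact convexOcc_plus σ τ h0 hs ih
  | minus σ τ h0 hs _ ih => exact convexOcc_minus σ τ h0 hs ih
  | plus2 σ τ h0 h1 hs _ ih => exact convexOcc_plus2 σ τ h0 h1 hs ih
  | minus2 σ τ h0 h1 hs _ ih => exact convexOcc_minus2 σ τ h0 h1 hs ih

/-! ### Convex occurrences give factorizations -/

/-- The permutation listing positions by increasing key: it sends a position to the number of
positions with smaller key. -/
noncomputable def rankPerm {N : ℕ} (k : Fin N → ℕ) (hk : Function.Injective k) :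
    Equiv.Perm (Fin N) :=
  Equiv.ofBijective
    (fun m => ⟨(Finset.univ.filter fun m' => k m' < k m).card, by
      have h : (Finset.univ.filter fun m' => k m' < k m) ⊂ Finset.univ :=
        Finset.filter_ssubset.2 ⟨m, Finset.mem_univ m, lt_irrefl _⟩
      simpa using Finset.card_lt_card h⟩)
    (Finite.injective_iff_bijective.1 (by
      intro p q h
      simp only [Fin.mk.injEq] at h
      apply hk
      -- two nested sets of equal size coincide
      rcases le_total (k p) (k q) with hle | hle
      · have hs : (Finset.univ.filter fun m' => k m' < k p) ⊆
            (Finset.univ.filter fun m' => k m' < k q) := fun m hm => by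
          simp only [Finset.mem_filter, Finset.mem_univ, true_and] at hm ⊢
          exact hm.trans_le hle
        have he := Finset.eq_of_subset_of_card_le hs h.ge
        have := Finset.ext_iff.1 he p
        simp only [Finset.mem_filter, Finset.mem_univ, true_and] at this
        omega
      · have hs : (Finset.univ.filter fun m' => k m' < k q) ⊆
            (Finset.univ.filter fun m' => k m' < k p) := fun m hm => by
          simp only [Finset.mem_filter, Finset.mem_univ, true_and] at hm ⊢
          exact hm.trans_le hle
        have he := Finset.eq_of_subset_of_card_le hs h.le
        have := Finset.ext_iff.1 he q
        simp only [Finset.mem_filter, Finset.mem_univ, true_and] at this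
        omega))

theorem rankPerm_val {N : ℕ} (k : Fin N → ℕ) (hk : Function.Injective k) (m : Fin N) :
    (rankPerm k hk m).val = (Finset.univ.filter fun m' => k m' < k m).card := rfl

theorem rankPerm_lt {N : ℕ} (k : Fin N → ℕ) (hk : Function.Injective k) (p q : Fin N) :
    rankPerm k hk p < rankPerm k hk q ↔ k p < k q := by
  have key (p q : Fin N) (h : k p ≤ k q) : rankPerm k hk p ≤ rankPerm k hk q := by
    rw [Fin.le_def, rankPerm_val, rankPerm_val]
    apply Finset.card_le_card
    intro m hm
    simp only [Finset.mem_filter, Finset.mem_univ, true_and] at hm ⊢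
    exact hm.trans_le h
  constructor
  · intro h
    by_contra hc
    exact absurd h (key q p (not_lt.1 hc)).not_gt
  · intro h
    refine lt_of_le_of_ne (key p q h.le) fun he => ?_
    rw [(rankPerm k hk).injective he] at h
    exact lt_irrefl _ h

/-- If `y` and `w` are linear extensions of the poset of non-inversions of `x` that differ only on
an occurrence of `σ`, which `y` lists by position and `w` by value, then the inversions of `x` split
into those of `y`, those of `σ`, and those of `x * w⁻¹`. -/
theorem len_eq_of_linearExtensions {N K : ℕ} (x y w : Equiv.Perm (Fin N)) (σ : Equiv.Perm (Fin K))
    (f : Fin K → Fin N) (hf : StrictMono f)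
    (hfx : ∀ a b, x (f a) < x (f b) ↔ σ a < σ b)
    (hext : ∀ p q, p < q → x p < x q → y p < y q ∧ w p < w q)
    (hout : ∀ p q, ¬ (p ∈ Set.range f ∧ q ∈ Set.range f) → (y p < y q ↔ w p < w q))
    (hfy : ∀ a b, y (f a) < y (f b) ↔ a < b)
    (hfw : ∀ a b, w (f a) < w (f b) ↔ σ a < σ b) :
    len x = len y + len σ + len (x * w⁻¹) := by
  classical
  have hA : len y = (Finset.univ.filter fun p : Fin N × Fin N =>
      (p.1 < p.2 ∧ x p.2 < x p.1) ∧ y p.2 < y p.1).card := by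
    unfold len
    congr 1
    ext ⟨p, q⟩
    simp only [Finset.mem_filter, Finset.mem_univ, true_and]
    refine ⟨fun ⟨h1, h2⟩ => ⟨⟨h1, ?_⟩, h2⟩, fun ⟨⟨h1, _⟩, h2⟩ => ⟨h1, h2⟩⟩
    by_contra hc
    have hne : x p ≠ x q := fun h => h1.ne (x.injective h)
    exact absurd h2 (hext p q h1 (lt_of_le_of_ne (not_lt.1 hc) hne)).1.not_gt
  have hB : len σ = (Finset.univ.filter fun p : Fin N × Fin N =>
      ((p.1 < p.2 ∧ x p.2 < x p.1) ∧ ¬ y p.2 < y p.1) ∧ w p.2 < w p.1).card := by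
    unfold len
    rw [← Finset.card_map (⟨Prod.map f f, hf.injective.prodMap hf.injective⟩ :
      Fin K × Fin K ↪ Fin N × Fin N)]
    congr 1
    ext ⟨p, q⟩
    simp only [Finset.mem_map, Finset.mem_filter, Finset.mem_univ, true_and,
      Function.Embedding.coeFn_mk, Prod.exists, Prod.map_apply, Prod.mk.injEq]
    constructor
    · rintro ⟨a, b, ⟨h1, h2⟩, rfl, rfl⟩
      exact ⟨⟨⟨hf h1, (hfx _ _).2 h2⟩, fun h => ((hfy _ _).1 h).not_gt h1⟩, (hfw _ _).2 h2⟩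
    · rintro ⟨⟨⟨h1, h2⟩, h3⟩, h4⟩
      by_cases hS : q ∈ Set.range f ∧ p ∈ Set.range f
      · obtain ⟨⟨b, rfl⟩, ⟨a, rfl⟩⟩ := hS
        exact ⟨a, b, ⟨hf.lt_iff_lt.1 h1, (hfx _ _).1 h2⟩, rfl, rfl⟩
      · exact absurd ((hout q p hS).2 h4) h3
  have hC : len (x * w⁻¹) = (Finset.univ.filter fun p : Fin N × Fin N =>
      ((p.1 < p.2 ∧ x p.2 < x p.1) ∧ ¬ y p.2 < y p.1) ∧ ¬ w p.2 < w p.1).card := by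
    unfold len
    symm
    rw [← Finset.card_map (Equiv.prodCongr w w).toEmbedding]
    symm
    congr 1
    ext ⟨u, v⟩
    obtain ⟨p, rfl⟩ := w.surjective u
    obtain ⟨q, rfl⟩ := w.surjective v
    simp only [Finset.mem_map, Finset.mem_filter, Finset.mem_univ, true_and,
      Equiv.coe_toEmbedding, Prod.exists, Equiv.prodCongr_apply, Prod.map_apply, Prod.mk.injEq,
      EmbeddingLike.apply_eq_iff_eq]
    simp only [Equiv.Perm.mul_apply, perm_inv_apply]
    constructor
    · rintro ⟨h1, h2⟩
      have hpq : p < q := by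
        by_contra hc
        have hne : q ≠ p := fun h => by rw [h] at h2; exact lt_irrefl _ h2
        exact absurd h1 (hext q p (lt_of_le_of_ne (not_lt.1 hc) hne) h2).2.not_gt
      refine ⟨p, q, ⟨⟨⟨hpq, h2⟩, fun h => ?_⟩, h1.not_gt⟩, rfl, rfl⟩
      -- a pair crossed by `y` is never in the occurrence, so `w` agrees with `y` on it
      by_cases hS : q ∈ Set.range f ∧ p ∈ Set.range f
      · obtain ⟨⟨b, rfl⟩, ⟨a, rfl⟩⟩ := hS
        exact ((hfy _ _).1 h).not_gt (hf.lt_iff_lt.1 hpq)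
      · exact ((hout q p hS).1 h).not_gt h1
    · rintro ⟨p', q', ⟨⟨⟨h1, h2⟩, _⟩, h4⟩, rfl, rfl⟩
      refine ⟨lt_of_le_of_ne (not_lt.1 h4) fun h => h1.ne (w.injective h), h2⟩
  have e1 := Finset.card_filter_add_card_filter_not
    (s := Finset.univ.filter fun p : Fin N × Fin N => p.1 < p.2 ∧ x p.2 < x p.1)
    (fun p => y p.2 < y p.1)
  have e2 := Finset.card_filter_add_card_filter_not
    (s := Finset.univ.filter fun p : Fin N × Fin N =>
      (p.1 < p.2 ∧ x p.2 < x p.1) ∧ ¬ y p.2 < y p.1)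
    (fun p => w p.2 < w p.1)
  rw [Finset.filter_filter, Finset.filter_filter] at e1 e2
  rw [← hA] at e1
  rw [← hB, ← hC] at e2
  have e0 : len x = (Finset.univ.filter fun p : Fin N × Fin N =>
      p.1 < p.2 ∧ x p.2 < x p.1).card := rfl
  omega

theorem factorizesOver_of_convex {N K : ℕ} (x : Equiv.Perm (Fin N)) (σ : Equiv.Perm (Fin K))
    (f : Fin K → Fin N) (hocc : IsOcc x Set.univ σ f) (hconv : Unobstructed x Set.univ f) :
    FactorizesOver x σ := by
  classical
  obtain ⟨-, hf, hfx⟩ := hocc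
  set S : Set (Fin N) := Set.range f with hS
  have hfS (a : Fin K) : f a ∈ S := ⟨a, rfl⟩
  -- the points outside `S` are split into those below `S` (class 0) and the others (class 2)
  let c : Fin N → ℕ := fun m =>
    if m ∈ S then 1 else if ∃ b, m < f b ∧ x m < x (f b) then 0 else 2
  have cS {m : Fin N} (h : m ∈ S) : c m = 1 := if_pos h
  have cS' {m : Fin N} (h : m ∉ S) : c m ≠ 1 := by simp only [c, if_neg h]; split_ifs <;> simp
  have hmono {p q : Fin N} (hpq : p < q) (hx : x p < x q) : c p ≤ c q := by
    by_cases hq : q ∈ S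
    · obtain ⟨b, rfl⟩ := hq
      rw [cS (hfS b)]
      by_cases hp : p ∈ S
      · rw [cS hp]
      · simp only [c, if_neg hp]
        rw [if_pos ⟨b, hpq, hx⟩]
        exact zero_le_one
    · by_cases hq' : ∃ b, q < f b ∧ x q < x (f b)
      · obtain ⟨b, h1, h2⟩ := hq'
        have hp : p ∉ S := by
          rintro ⟨a, rfl⟩
          exact hconv q (Set.mem_univ q) a b hpq h1 hx h2
        simp only [c, if_neg hp]
        rw [if_pos ⟨b, hpq.trans h1, hx.trans h2⟩]
        exact Nat.zero_le _
      · have : c q = 2 := by simp only [c, if_neg hq, if_neg hq']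
        rw [this]
        simp only [c]
        split_ifs <;> simp
  -- lexicographic keys: by class, then by position or, for the points of `S` in `k2`, by value
  let v : Fin N → ℕ := fun m => if m ∈ S then (x m).val else m.val
  have hv (m : Fin N) : v m < N := by
    simp only [v]; split_ifs
    exacts [(x m).isLt, m.isLt]
  let k1 : Fin N → ℕ := fun m => c m * N + m.val
  let k2 : Fin N → ℕ := fun m => c m * N + v m
  have lex {a b s t : ℕ} (ha : s < N) (hb : t < N) :
      a * N + s < b * N + t ↔ a < b ∨ (a = b ∧ s < t) := by
    rcases lt_trichotomy a b with h | h | h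
    · have := Nat.mul_le_mul_right N (Nat.succ_le_of_lt h)
      rw [Nat.succ_mul] at this
      exact iff_of_true (by omega) (Or.inl h)
    · subst h; omega
    · have := Nat.mul_le_mul_right N (Nat.succ_le_of_lt h)
      rw [Nat.succ_mul] at this
      exact iff_of_false (by omega) (by omega)
  have lt1 (p q : Fin N) : k1 p < k1 q ↔ c p < c q ∨ (c p = c q ∧ p < q) := lex p.isLt q.isLt
  have lt2 (p q : Fin N) : k2 p < k2 q ↔ c p < c q ∨ (c p = c q ∧ v p < v q) := lex (hv p) (hv q)
  have hout (p q : Fin N) (h : ¬ (p ∈ S ∧ q ∈ S)) : k1 p < k1 q ↔ k2 p < k2 q := by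
    rw [lt1, lt2]
    by_cases hc : c p = c q
    · have hp : p ∉ S := fun hp => h ⟨hp, by
        by_contra hq; exact cS' hq (hc ▸ cS hp)⟩
      have hq : q ∉ S := fun hq => cS' hp (hc.trans (cS hq))
      simp only [v, if_neg hp, if_neg hq, Fin.lt_def]
    · simp [hc]
  have in1 {p q : Fin N} (hp : p ∈ S) (hq : q ∈ S) : k1 p < k1 q ↔ p < q := by
    rw [lt1, cS hp, cS hq]; simp
  have in2 {p q : Fin N} (hp : p ∈ S) (hq : q ∈ S) : k2 p < k2 q ↔ x p < x q := by
    rw [lt2, cS hp, cS hq]; simp [v, hp, hq]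
  have tot1 {p q : Fin N} (h : p ≠ q) : k1 p < k1 q ∨ k1 q < k1 p := by
    rw [lt1, lt1]
    rcases lt_or_gt_of_ne h with h | h <;> rcases lt_trichotomy (c p) (c q) with h' | h' | h' <;>
      simp [h, h']
  have inj1 : Function.Injective k1 := fun p q h => by
    by_contra hne
    have := tot1 hne
    omega
  have inj2 : Function.Injective k2 := fun p q h => by
    by_contra hne
    by_cases hpq : p ∈ S ∧ q ∈ S
    · have h1 := (in2 hpq.1 hpq.2).not.1 (by omega)
      have h2 := (in2 hpq.2 hpq.1).not.1 (by omega)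
      exact hne (x.injective (le_antisymm (not_lt.1 h2) (not_lt.1 h1)))
    · have h1 := hout p q hpq
      have h2 := hout q p (fun h => hpq h.symm)
      have := tot1 hne
      omega
  let y := rankPerm k1 inj1
  let w := rankPerm k2 inj2
  set D : Finset (Fin N) := Finset.univ.filter fun m => c m = 0 with hD
  -- the window: before the `t`-th point of the occurrence come all of `D` and part of `S`
  have count (k : Fin N → ℕ) (hk : Function.Injective k) (t : Fin K) (g : Fin K → Fin K → Prop)
      (hlow : ∀ m, m ∉ S → (k m < k (f t) ↔ c m = 0))
      (hin : ∀ a, k (f a) < k (f t) ↔ g a t) :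
      (rankPerm k hk (f t)).val = D.card + (Finset.univ.filter fun a => g a t).card := by
    rw [rankPerm_val, ← Finset.card_map (⟨f, hf.injective⟩ : Fin K ↪ Fin N),
      ← Finset.card_union_of_disjoint]
    · congr 1
      ext m
      simp only [hD, Finset.mem_filter, Finset.mem_univ, true_and, Finset.mem_union,
        Finset.mem_map, Function.Embedding.coeFn_mk]
      by_cases hm : m ∈ S
      · obtain ⟨a, rfl⟩ := hm
        rw [hin, cS (hfS a)]
        simp [hf.injective.eq_iff]
      · rw [hlow m hm]
        refine ⟨Or.inl, fun h => h.resolve_right ?_⟩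
        rintro ⟨a, -, rfl⟩
        exact hm (hfS a)
    · rw [Finset.disjoint_left]
      intro m hm hm'
      simp only [hD, Finset.mem_filter, Finset.mem_univ, true_and, Finset.mem_map,
        Function.Embedding.coeFn_mk] at hm hm'
      obtain ⟨a, -, rfl⟩ := hm'
      rw [cS (hfS a)] at hm
      exact one_ne_zero hm
  have low1 (t : Fin K) (m : Fin N) (hm : m ∉ S) : k1 m < k1 (f t) ↔ c m = 0 := by
    have := cS' hm
    rw [lt1, cS (hfS t)]
    omega
  have hy (t : Fin K) : (y (f t)).val = D.card + t.val := by
    rw [count k1 inj1 t (fun a t => a < t) (low1 t)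
      (fun a => (in1 (hfS a) (hfS t)).trans hf.lt_iff_lt)]
    congr 1
    refine (congrArg Finset.card ?_).trans (Fin.card_Iio t)
    ext
    simp
  have hw (t : Fin K) : (w (f t)).val = D.card + (σ t).val := by
    rw [count k2 inj2 t (fun a t => σ a < σ t)
      (fun m hm => (hout m (f t) (fun h => hm h.1)).symm.trans (low1 t m hm))
      (fun a => (in2 (hfS a) (hfS t)).trans (hfx a t))]
    congr 1
    rw [← Finset.card_map σ.toEmbedding]
    refine (congrArg Finset.card ?_).trans (Fin.card_Iio (σ t))
    ext b
    obtain ⟨a, rfl⟩ := σ.surjective b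
    simp
  have hyw (p : Fin N) (hp : p ∉ S) : w p = y p := by
    apply Fin.ext
    rw [rankPerm_val, rankPerm_val]
    congr 1
    ext m
    simp only [Finset.mem_filter, Finset.mem_univ, true_and]
    exact (hout m p (fun h => hp h.2)).symm
  have hj : D.card + K ≤ N := by
    have h1 : (D ∪ Finset.univ.map ⟨f, hf.injective⟩).card = D.card + K := by
      rw [Finset.card_union_of_disjoint, Finset.card_map, Finset.card_fin]
      rw [Finset.disjoint_left]
      intro m hm hm'
      simp only [hD, Finset.mem_filter, Finset.mem_univ, true_and, Finset.mem_map,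
        Function.Embedding.coeFn_mk] at hm hm'
      obtain ⟨a, rfl⟩ := hm'
      rw [cS (hfS a)] at hm
      exact one_ne_zero hm
    rw [← h1]
    exact card_finset_fin_le _
  have ywin (t : Fin K) : y⁻¹ ⟨D.card + t.val, by have := t.isLt; omega⟩ = f t := by
    rw [Equiv.Perm.inv_eq_iff_eq]
    exact Fin.ext (hy t).symm
  have wwin (t : Fin K) : w⁻¹ ⟨D.card + t.val, by have := t.isLt; omega⟩ = f (σ⁻¹ t) := by
    rw [Equiv.Perm.inv_eq_iff_eq]
    exact Fin.ext (by rw [hw]; simp)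
  refine ⟨D.card, hj, w * y⁻¹, y, x * w⁻¹, ?_, ?_, ?_, ?_, ?_, ?_⟩
  · intro t
    rw [Equiv.Perm.mul_apply, ywin, hw]
  · intro m hm
    obtain ⟨p, rfl⟩ := y.surjective m
    rw [Equiv.Perm.mul_apply, perm_inv_apply]
    apply hyw
    rintro ⟨t, rfl⟩
    rw [hy] at hm
    have := t.isLt
    omega
  · group
  · refine len_eq_of_linearExtensions x y w σ f hf hfx ?_ ?_ ?_ ?_
    · intro p q hpq hx
      have hc := hmono hpq hx
      have h1 : k1 p < k1 q := by
        rw [lt1]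
        rcases hc.lt_or_eq with h | h
        exacts [Or.inl h, Or.inr ⟨h, hpq⟩]
      refine ⟨(rankPerm_lt _ _ _ _).2 h1, (rankPerm_lt _ _ _ _).2 ?_⟩
      by_cases hS : p ∈ S ∧ q ∈ S
      · exact (in2 hS.1 hS.2).2 hx
      · exact (hout p q hS).1 h1
    · intro p q h
      rw [rankPerm_lt, rankPerm_lt]
      exact hout p q h
    · intro a b
      rw [rankPerm_lt, in1 (hfS a) (hfS b)]
      exact hf.lt_iff_lt
    · intro a b
      rw [rankPerm_lt, in2 (hfS a) (hfS b)]
      exact hfx a b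
  · intro a b hab
    rw [ywin, ywin]
    exact hf hab
  · intro a b hab
    rw [Equiv.Perm.mul_apply, Equiv.Perm.mul_apply, wwin, wwin, hfx]
    simpa using hab

/-- The preimage of the window under `y` is an occurrence of `σ`: its positions increase because
`y⁻¹` does so on the window, and its values are ordered like `σ` because `z` increases there. -/
theorem contains_of_factorizesOver {N K : ℕ} (x : Equiv.Perm (Fin N)) (σ : Equiv.Perm (Fin K))
    (h : FactorizesOver x σ) : Contains x σ := by
  obtain ⟨j, hj, σ', y, z, h1, -, rfl, -, hy, hz⟩ := h
  have hzm : StrictMono fun a : Fin K => z ⟨j + a.val, by have := a.isLt; omega⟩ :=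
    fun a b hab => hz a b hab
  refine ⟨fun a => y⁻¹ ⟨j + a.val, by have := a.isLt; omega⟩, fun a b hab => hy a b hab, ?_⟩
  intro a b
  have e (t : Fin K) : σ' ⟨j + t.val, by have := t.isLt; omega⟩ =
      ⟨j + (σ t).val, by have := (σ t).isLt; omega⟩ := Fin.ext (h1 t)
  simp only [Equiv.Perm.mul_apply, perm_apply_inv, e]
  exact hzm.lt_iff_lt

theorem stmt5 {K : ℕ} (σ : Equiv.Perm (Fin K)) (hσ : Bountiful σ)
    (N : ℕ) (hN : 1 ≤ N) (x : Equiv.Perm (Fin N)) :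
    Contains x σ ↔ FactorizesOver x σ := by
  refine ⟨fun ⟨f, hf, hfx⟩ => ?_, contains_of_factorizesOver x σ⟩
  obtain ⟨g, hg, hu⟩ := exists_convex σ hσ N x Set.univ f ⟨fun _ => Set.mem_univ _, hf, hfx⟩
  exact factorizesOver_of_convex x σ g hg hu
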